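/- In LPQ⊃,F, logical equivalence is not the same as logical consequence together with its inverse: there exist formulas A1 and A2 of LPQ⊃,F(Σ) such that {A1} ⊨ A2 and {A2} ⊨ A1 but A1 ≢ A2; for instance, for a proposition symbol p of Σ, the formulas A1 = (p ⊃ p) and A2 = ¬⊥ are mutual logical consequences but not logically equivalent. -/

import Mathlib

namespace LPQ

/-- The three truth values: true, false, both-true-and-false. -/
inductive TV : Type where
  | t : TV
  | f : TV
  | b : TV
deriving DecidableEq

/-- A first-order signature: function symbols and predicate symbols of each arity. -/
structure Signature : Type 1 where
  Func : ℕ → Type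
  Pred : ℕ → Type

/-- Terms over a signature (variables are natural numbers). -/
inductive Term (σ : Signature) : Type where
  | var : ℕ → Term σ
  | func : {n : ℕ} → σ.Func n → (Fin n → Term σ) → Term σ

/-- Formulas of LPQ⊃,F over a signature. -/
inductive Formula (σ : Signature) : Type where
  | falsum : Formula σ
  | pred : {n : ℕ} → σ.Pred n → (Fin n → Term σ) → Formula σ
  | eq : Term σ → Term σ → Formula σ
  | neg : Formula σ → Formula σ
  | and : Formula σ → Formula σ → Formula σ
  | or : Formula σ → Formula σ → Formula σ
  | imp : Formula σ → Formula σ → Formula σ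
  | all : ℕ → Formula σ → Formula σ
  | ex : ℕ → Formula σ → Formula σ

variable {σ : Signature}

/-- Free variables of a term. -/
def Term.fv : Term σ → Set ℕ
  | .var x => {x}
  | .func _ ts => ⋃ i, (ts i).fv

/-- Free variables of a formula. -/
def Formula.fv : Formula σ → Set ℕ
  | .falsum => ∅
  | .pred _ ts => ⋃ i, (ts i).fv
  | .eq u v => u.fv ∪ v.fv
  | .neg A => A.fv
  | .and A B => A.fv ∪ B.fv
  | .or A B => A.fv ∪ B.fv
  | .imp A B => A.fv ∪ B.fv
  | .all x A => A.fv \ {x}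
  | .ex x A => A.fv \ {x}

/-- A structure of LPQ⊃,F(σ): a nonempty domain, interpretations of the function
symbols, three-valued interpretations of the predicate symbols, and a three-valued
interpretation of equality which is designated on the diagonal. -/
structure Structure (σ : Signature) : Type 1 where
  Dom : Type
  nonempty : Nonempty Dom
  interpFunc : {n : ℕ} → σ.Func n → (Fin n → Dom) → Dom
  interpPred : {n : ℕ} → σ.Pred n → (Fin n → Dom) → TV
  interpEq : Dom → Dom → TV
  interpEq_refl : ∀ d, interpEq d d = TV.t ∨ interpEq d d = TV.b

/-- Value of a term in a structure under an assignment. -/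
def Term.eval (M : Structure σ) (α : ℕ → M.Dom) : Term σ → M.Dom
  | .var x => α x
  | .func f ts => M.interpFunc f (fun i => (ts i).eval M α)

open Classical in
/-- The three-valued interpretation of formulas of LPQ⊃,F. -/
noncomputable def Formula.eval (M : Structure σ) : (ℕ → M.Dom) → Formula σ → TV
  | α, .pred P ts => M.interpPred P (fun i => (ts i).eval M α)
  | α, .eq u v => M.interpEq (u.eval M α) (v.eval M α)
  | _, .falsum => TV.f
  | α, .neg A =>
      match A.eval M α with
      | TV.t => TV.f
      | TV.f => TV.t
      | TV.b => TV.b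
  | α, .and A B =>
      match A.eval M α, B.eval M α with
      | TV.t, TV.t => TV.t
      | TV.f, _ => TV.f
      | _, TV.f => TV.f
      | _, _ => TV.b
  | α, .or A B =>
      match A.eval M α, B.eval M α with
      | TV.t, _ => TV.t
      | _, TV.t => TV.t
      | TV.f, TV.f => TV.f
      | _, _ => TV.b
  | α, .imp A B =>
      match A.eval M α, B.eval M α with
      | TV.f, _ => TV.t
      | _, TV.t => TV.t
      | _, TV.f => TV.f
      | _, _ => TV.b
  | α, .all x A =>
      if ∀ d, Formula.eval M (Function.update α x d) A = TV.t then TV.t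
      else if ∃ d, Formula.eval M (Function.update α x d) A = TV.f then TV.f
      else TV.b
  | α, .ex x A =>
      if ∃ d, Formula.eval M (Function.update α x d) A = TV.t then TV.t
      else if ∀ d, Formula.eval M (Function.update α x d) A = TV.f then TV.f
      else TV.b

/-- Logical consequence of LPQ⊃,F: in every structure under every assignment,
either some premise is false or the conclusion is true or both-true-and-false. -/
def LCon (Γ : Set (Formula σ)) (A : Formula σ) : Prop :=
  ∀ (M : Structure σ) (α : ℕ → M.Dom),
    (∃ B ∈ Γ, B.eval M α = TV.f) ∨ (A.eval M α = TV.t ∨ A.eval M α = TV.b)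

/-- Logical equivalence of LPQ⊃,F: the same truth value in every structure
under every assignment. -/
def LEqv (A1 A2 : Formula σ) : Prop :=
  ∀ (M : Structure σ) (α : ℕ → M.Dom), A1.eval M α = A2.eval M α

end LPQ

namespace LPQ

/-- **In LPQ⊃,F logical equivalence is not the same as mutual logical
consequence**: there exist formulas A1 and A2 with {A1} ⊨ A2 and {A2} ⊨ A1 but
A1 ≢ A2; in particular, for a proposition symbol p, the formulas p ⊃ p and ¬⊥
are mutual logical consequences but not logically equivalent. -/
theorem mutual_consequence_not_equivalence (σ : Signature) (p : σ.Pred 0) :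
    (∃ A1 A2 : Formula σ, LCon {A1} A2 ∧ LCon {A2} A1 ∧ ¬ LEqv A1 A2) ∧
    (LCon {(Formula.pred p ![]).imp (Formula.pred p ![])}
        (Formula.neg .falsum : Formula σ) ∧
     LCon {(Formula.neg .falsum : Formula σ)}
        ((Formula.pred p ![]).imp (Formula.pred p ![])) ∧
     ¬ LEqv ((Formula.pred p ![]).imp (Formula.pred p ![]))
        (Formula.neg .falsum : Formula σ)) := by
  have key : LCon {(Formula.pred p ![]).imp (Formula.pred p ![])}
        (Formula.neg .falsum : Formula σ) ∧
     LCon {(Formula.neg .falsum : Formula σ)}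
        ((Formula.pred p ![]).imp (Formula.pred p ![])) ∧
     ¬ LEqv ((Formula.pred p ![]).imp (Formula.pred p ![]))
        (Formula.neg .falsum : Formula σ) := by
    refine ⟨fun M α => Or.inr (Or.inl ?_), fun M α => Or.inr ?_, fun h => ?_⟩
    · simp [Formula.eval]
    · simp only [Formula.eval]
      generalize M.interpPred p _ = v
      cases v <;> simp
    · have h1 := h ⟨Unit, ⟨()⟩, fun _ _ => (), fun _ _ => TV.b, fun _ _ => TV.t,
        fun _ => Or.inl rfl⟩ (fun _ => ())
      simp [Formula.eval] at h1
  exact ⟨⟨_, _, key⟩, key⟩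

end LPQ
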